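/- Let Ψ̄ : ℝ⁴ → ℝ be the unique twice continuously differentiable radially symmetric function with ΔΨ̄(y) + 1/(1+|y|²) = 0 on ℝ⁴ and Ψ̄(0) = 1, and write Ψ̄(y) = ψ(|y|) for a function ψ : [0,∞) → ℝ. Then there exists a constant C > 0 such that |ψ'(r) + 1/(2r)| ≤ C · ln(1+r)/r³ for all r ≥ 2; that is, ψ'(r) = −(1/(2r))·(1 + O(ln(1+r)/r²)) as r → ∞. -/

import Mathlib

/-- The Euclidean Laplacian `Δu(y) = Σᵢ ∂²u/∂yᵢ²` on `ℝ⁴`. -/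
noncomputable def laplacian (u : EuclideanSpace ℝ (Fin 4) → ℝ)
    (x : EuclideanSpace ℝ (Fin 4)) : ℝ :=
  ∑ i : Fin 4,
    fderiv ℝ (fun y => fderiv ℝ u y (EuclideanSpace.single i 1)) x (EuclideanSpace.single i 1)

/-!
Away from the origin a radial function `Ψ y = ψ ‖y‖` on an `(m + 1)`-dimensional Euclidean space
satisfies `ΔΨ = ψ'' + (m / t) ψ'` at radius `t`, so `ΔΨ = f ‖·‖` becomes `(t ^ m ψ')' = t ^ m f`.
Since `ψ` extends to an even `C²` function, `ψ' 0 = 0` and the flux `t ^ m ψ'` vanishes at `0`,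
hence `r ^ m ψ' r = ∫₀ʳ t ^ m f t`. For `m = 3` and `f t = -1 / (1 + t ^ 2)` the integral is
elementary: `ψ' r + 1 / (2 r) = log (1 + r ^ 2) / (2 r ^ 3)`, and `1 + r ^ 2 ≤ (1 + r) ^ 2`.
-/

open Set Module
open scoped Topology Laplacian RealInnerProductSpace

section RadialLaplacian

variable {E : Type*} [NormedAddCommGroup E] [InnerProductSpace ℝ E] {x : E} {g : ℝ → ℝ}

theorem hasFDerivAt_norm (hx : x ≠ 0) :
    HasFDerivAt (fun y : E ↦ ‖y‖) (‖x‖⁻¹ • innerSL ℝ x) x := by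
  have hx' : ‖x‖ ≠ 0 := norm_ne_zero_iff.mpr hx
  have h := (hasStrictFDerivAt_norm_sq x).hasFDerivAt.sqrt (pow_ne_zero 2 hx')
  simp only [Real.sqrt_sq (norm_nonneg _)] at h
  refine h.congr_fderiv ?_
  rw [two_nsmul, ← two_smul ℝ, smul_smul]
  congr 1
  field_simp

theorem hasFDerivAt_comp_norm {g' : ℝ} (hg : HasDerivAt g g' ‖x‖) (hx : x ≠ 0) :
    HasFDerivAt (fun y : E ↦ g ‖y‖) ((g' / ‖x‖) • innerSL ℝ x) x :=
  (hg.comp_hasFDerivAt x (hasFDerivAt_norm hx)).congr_fderiv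
    (by rw [smul_smul, div_eq_mul_inv])

theorem fderiv_fderiv_comp_norm_apply (hg : ∀ᶠ t in 𝓝 ‖x‖, DifferentiableAt ℝ g t)
    (hg' : DifferentiableAt ℝ (deriv g) ‖x‖) (hx : x ≠ 0) (v w : E) :
    fderiv ℝ (fderiv ℝ fun y : E ↦ g ‖y‖) x v w =
      deriv g ‖x‖ / ‖x‖ * ⟪v, w⟫ +
        (deriv (deriv g) ‖x‖ - deriv g ‖x‖ / ‖x‖) * (⟪x, v⟫ * ⟪x, w⟫) / ‖x‖ ^ 2 := by
  have hx' : ‖x‖ ≠ 0 := norm_ne_zero_iff.mpr hx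
  have hgrad : fderiv ℝ (fun y : E ↦ g ‖y‖) =ᶠ[𝓝 x]
      fun y ↦ (deriv g ‖y‖ / ‖y‖) • innerSL ℝ y := by
    filter_upwards [continuous_norm.continuousAt.eventually hg, isOpen_ne.mem_nhds hx]
      with y hgy hy
    exact (hasFDerivAt_comp_norm hgy.hasDerivAt hy).fderiv
  have hquot := hasFDerivAt_comp_norm (hg'.hasDerivAt.div (hasDerivAt_id ‖x‖) hx') hx
  have hinner (a b : E) : (innerSL ℝ : E →L[ℝ] E →L[ℝ] ℝ) a b = ⟪a, b⟫ := rfl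
  have hhess := hquot.smul (innerSL ℝ : E →L[ℝ] E →L[ℝ] ℝ).hasFDerivAt
  rw [hgrad.fderiv_eq]
  refine (congrArg (fun L ↦ L v w) hhess.fderiv).trans ?_
  simp only [Pi.div_apply, id_eq, mul_one, add_apply, smul_apply,
    ContinuousLinearMap.smulRight_apply, hinner, smul_eq_mul]
  field_simp

theorem laplacian_comp_norm [FiniteDimensional ℝ E]
    (hg : ∀ᶠ t in 𝓝 ‖x‖, DifferentiableAt ℝ g t)
    (hg' : DifferentiableAt ℝ (deriv g) ‖x‖) (hx : x ≠ 0) :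
    Δ (fun y : E ↦ g ‖y‖) x =
      deriv (deriv g) ‖x‖ + (finrank ℝ E - 1) * (deriv g ‖x‖ / ‖x‖) := by
  have hx' : ‖x‖ ≠ 0 := norm_ne_zero_iff.mpr hx
  simp only [InnerProductSpace.laplacian_eq_iteratedFDeriv_stdOrthonormalBasis,
    iteratedFDeriv_two_apply, Matrix.cons_val_zero, Matrix.cons_val_one,
    fderiv_fderiv_comp_norm_apply hg hg' hx, Finset.sum_add_distrib, ← Finset.mul_sum,
    ← Finset.sum_div, ← pow_two, OrthonormalBasis.sum_sq_inner_left]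
  simp only [inner_self_eq_norm_sq_to_K, OrthonormalBasis.norm_eq_one, Real.ringHom_apply, one_pow,
    Finset.sum_const, Finset.card_univ, Fintype.card_fin, nsmul_eq_mul, mul_one]
  field_simp
  ring

end RadialLaplacian

/- `ψ` itself may be neither even nor smooth: its values at negative reals are unconstrained. -/
theorem exists_contDiff_even_profile {E F : Type*} [NormedAddCommGroup E] [NormedSpace ℝ E]
    [Nontrivial E] [NormedAddCommGroup F] [NormedSpace ℝ F] {Ψ : E → F} {ψ : ℝ → F}
    {n : WithTop ℕ∞} (hΨ : ContDiff ℝ n Ψ) (hψ : ∀ y, Ψ y = ψ ‖y‖) :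
    ∃ g : ℝ → F, ContDiff ℝ n g ∧ g.Even ∧ EqOn g ψ (Ici 0) := by
  obtain ⟨e, he⟩ := exists_norm_eq E zero_le_one
  refine ⟨fun t ↦ Ψ (t • e), by fun_prop, fun t ↦ ?_, fun t ht ↦ ?_⟩
  · simp [hψ]
  · simp [hψ, norm_smul, he, abs_of_nonneg (mem_Ici.mp ht)]

theorem odd_deriv_of_even {𝕜 F : Type*} [NontriviallyNormedField 𝕜] [NormedAddCommGroup F]
    [NormedSpace 𝕜 F] {g : 𝕜 → F} (hg : g.Even) : (deriv g).Odd := by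
  intro t
  have h := deriv_comp_neg g t
  rw [funext hg] at h
  rw [h, neg_neg]

theorem pow_mul_eq_integral_of_deriv_add {u f : ℝ → ℝ} {m : ℕ} {r : ℝ} (hu : ContDiff ℝ 1 u)
    (hu₀ : u 0 = 0) (hr : 0 ≤ r)
    (hode : ∀ t ∈ Ioo 0 r, deriv u t + m * (u t / t) = f t) :
    r ^ m * u r = ∫ t in 0..r, t ^ m * f t := by
  have hderiv (t : ℝ) : HasDerivAt (fun s ↦ s ^ m * u s)
      (m * t ^ (m - 1) * u t + t ^ m * deriv u t) t :=
    (hasDerivAt_pow m t).mul (hu.differentiable one_ne_zero t).hasDerivAt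
  have hcont : Continuous fun t ↦ m * t ^ (m - 1) * u t + t ^ m * deriv u t := by
    have := hu.continuous
    have := hu.continuous_deriv_one
    fun_prop
  calc r ^ m * u r = ∫ t in 0..r, m * t ^ (m - 1) * u t + t ^ m * deriv u t := by
        rw [intervalIntegral.integral_eq_sub_of_hasDerivAt (fun t _ ↦ hderiv t)
          (hcont.intervalIntegrable 0 r), hu₀, mul_zero, sub_zero]
    _ = ∫ t in 0..r, t ^ m * f t := by
        refine intervalIntegral.integral_congr_Ioo_of_le hr fun t ht ↦ ?_
        have ht₀ : t ≠ 0 := ht.1.ne'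
        rw [← hode t ht]
        rcases m with _ | m
        · simp
        · simp only [Nat.add_sub_cancel]
          field_simp
          ring

theorem pow_mul_deriv_eq_integral_of_laplacian_eq {E : Type*} [NormedAddCommGroup E]
    [InnerProductSpace ℝ E] [FiniteDimensional ℝ E] {Ψ : E → ℝ} {ψ f : ℝ → ℝ} {m : ℕ} {r : ℝ}
    (hE : finrank ℝ E = m + 1) (hΨ : ContDiff ℝ 2 Ψ) (hψ : ∀ y, Ψ y = ψ ‖y‖)
    (hΔ : ∀ y, Δ Ψ y = f ‖y‖) (hr : 0 < r) :
    r ^ m * deriv ψ r = ∫ t in 0..r, t ^ m * f t := by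
  have : Nontrivial E := nontrivial_of_finrank_eq_succ hE
  obtain ⟨g, hg, hgeven, hgψ⟩ := exists_contDiff_even_profile hΨ hψ
  have hΨg : Ψ = fun y ↦ g ‖y‖ := funext fun y ↦ (hψ y).trans (hgψ (norm_nonneg y)).symm
  have hode (t : ℝ) (ht : 0 < t) : deriv (deriv g) t + m * (deriv g t / t) = f t := by
    obtain ⟨x, rfl⟩ := exists_norm_eq E ht.le
    rw [← hΔ x, hΨg, laplacian_comp_norm (.of_forall (hg.differentiable two_ne_zero))
      (hg.differentiable_deriv_two _) (norm_pos_iff.mp ht), hE]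
    simp
  have hderiv : deriv ψ r = deriv g r :=
    (hgψ.eventuallyEq_of_mem (Ici_mem_nhds hr)).symm.deriv_eq
  rw [hderiv]
  exact pow_mul_eq_integral_of_deriv_add hg.deriv' (odd_deriv_of_even hgeven).map_zero hr.le
    fun t ht ↦ hode t ht.1

theorem integral_pow_three_div_one_add_sq (r : ℝ) :
    ∫ t in 0..r, t ^ 3 / (1 + t ^ 2) = (r ^ 2 - Real.log (1 + r ^ 2)) / 2 := by
  have hpos (t : ℝ) : 1 + t ^ 2 ≠ 0 := by positivity
  have hderiv (t : ℝ) :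
      HasDerivAt (fun s ↦ (s ^ 2 - Real.log (1 + s ^ 2)) / 2) (t ^ 3 / (1 + t ^ 2)) t := by
    have hsq : HasDerivAt (fun s : ℝ ↦ s ^ 2) (2 * t) t := by simpa using hasDerivAt_pow 2 t
    refine ((hsq.sub ((hsq.const_add 1).log (hpos t))).div_const 2).congr_deriv ?_
    have := hpos t
    field_simp
    ring
  have hcont : Continuous fun t : ℝ ↦ t ^ 3 / (1 + t ^ 2) := by fun_prop (disch := exact hpos _)
  rw [intervalIntegral.integral_eq_sub_of_hasDerivAt (fun t _ ↦ hderiv t)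
    (hcont.intervalIntegrable 0 r)]
  simp

theorem log_one_add_sq_le {r : ℝ} (hr : 0 ≤ r) :
    Real.log (1 + r ^ 2) ≤ 2 * Real.log (1 + r) :=
  calc Real.log (1 + r ^ 2) ≤ Real.log ((1 + r) ^ 2) :=
        Real.log_le_log (by positivity) (by nlinarith)
    _ = 2 * Real.log (1 + r) := by simp [Real.log_pow]

section DimensionFour

variable {E : Type*} [NormedAddCommGroup E] [InnerProductSpace ℝ E] [FiniteDimensional ℝ E]
  {Ψ : E → ℝ} {ψ : ℝ → ℝ} {r : ℝ}

theorem deriv_add_one_div_eq_of_laplacian_dim4 (hE : finrank ℝ E = 4) (hΨ : ContDiff ℝ 2 Ψ)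
    (hΔ : ∀ y, Δ Ψ y + 1 / (1 + ‖y‖ ^ 2) = 0) (hψ : ∀ y, Ψ y = ψ ‖y‖) (hr : 0 < r) :
    deriv ψ r + 1 / (2 * r) = Real.log (1 + r ^ 2) / (2 * r ^ 3) := by
  have hflux : r ^ 3 * deriv ψ r = -((r ^ 2 - Real.log (1 + r ^ 2)) / 2) := by
    rw [pow_mul_deriv_eq_integral_of_laplacian_eq (f := fun t ↦ -(1 / (1 + t ^ 2))) hE hΨ hψ
      (fun y ↦ eq_neg_of_add_eq_zero_left (hΔ y)) hr, ← integral_pow_three_div_one_add_sq,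
      ← intervalIntegral.integral_neg]
    simp only [mul_neg, mul_one_div]
  field_simp
  linarith

theorem radial_solution_dim4_derivative_asymptotics_general (hE : finrank ℝ E = 4)
    (hΨ : ContDiff ℝ 2 Ψ) (hΔ : ∀ y, Δ Ψ y + 1 / (1 + ‖y‖ ^ 2) = 0)
    (hψ : ∀ y, Ψ y = ψ ‖y‖) (hr : 0 < r) :
    |deriv ψ r + 1 / (2 * r)| ≤ Real.log (1 + r) / r ^ 3 := by
  have hlog : 0 ≤ Real.log (1 + r ^ 2) := Real.log_nonneg (by nlinarith)
  rw [deriv_add_one_div_eq_of_laplacian_dim4 hE hΨ hΔ hψ hr, abs_of_nonneg (by positivity),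
    ← div_div]
  gcongr
  linarith [log_one_add_sq_le hr.le]

end DimensionFour

theorem laplacian_eq_laplacian_of_contDiffAt {u : EuclideanSpace ℝ (Fin 4) → ℝ}
    {x : EuclideanSpace ℝ (Fin 4)} (hu : ContDiffAt ℝ 2 u x) : laplacian u x = Δ u x := by
  have hdiff : DifferentiableAt ℝ (fderiv ℝ u) x :=
    (hu.fderiv_right (m := 1) (by norm_num)).differentiableAt one_ne_zero
  simp [laplacian, iteratedFDeriv_two_apply, fderiv_clm_apply hdiff,
    InnerProductSpace.laplacian_eq_iteratedFDeriv_orthonormalBasis u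
      (EuclideanSpace.basisFun (Fin 4) ℝ)]

theorem radial_solution_dim4_derivative_asymptotics
    (Ψ : EuclideanSpace ℝ (Fin 4) → ℝ) (ψ : ℝ → ℝ)
    (h1 : ContDiff ℝ 2 Ψ)
    (h2 : ∀ y z, ‖y‖ = ‖z‖ → Ψ y = Ψ z)
    (h3 : ∀ y, laplacian Ψ y + 1 / (1 + ‖y‖ ^ 2) = 0)
    (h4 : Ψ 0 = 1)
    (hψ : ∀ y, Ψ y = ψ ‖y‖) :
    ∃ C : ℝ, 0 < C ∧
      ∀ r : ℝ, 2 ≤ r →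
        |deriv ψ r + 1 / (2 * r)| ≤ C * Real.log (1 + r) / r ^ 3 := by
  refine ⟨1, one_pos, fun r hr ↦ ?_⟩
  rw [one_mul]
  exact radial_solution_dim4_derivative_asymptotics_general finrank_euclideanSpace_fin h1
    (fun y ↦ laplacian_eq_laplacian_of_contDiffAt h1.contDiffAt ▸ h3 y) hψ (by linarith)
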